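/- For every t > 0, the surviving mass Q(t) = ∫_{−∞}^{L} p(x, t) dx of the absorbing-boundary solution satisfies 0 < Q(t) < 1 (the density is not normalized due to absorption at the wall). -/

import Mathlib

/-!
Completing the square makes the drift cancel between the image term and the direct term: their
ratio is `e^{-(L - x₀)(L - x)/(Dt)}`, which is `1` at the wall `x = L` and smaller than `1` at every
`x` on the same side of the wall as `x₀`. Hence `0 < p < U(·, t, x₀)` on that side, and both bounds
on the mass follow by integration, because `U(·, t, x₀)` is a Gaussian probability density.
-/

open Real MeasureTheory

/-- The free advection–diffusion kernel `U(x, t, η)`. -/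
noncomputable def U (D ν : ℝ) (x t η : ℝ) : ℝ :=
  (1 / Real.sqrt (4 * Real.pi * D * t)) * Real.exp (-(x - η - ν * t) ^ 2 / (4 * D * t))

/-- The absorbing-boundary solution `p(x, t) = U(x, t, x₀) − e^{(ν/D)(L − x₀)} U(x, t, 2L − x₀)`. -/
noncomputable def pAbs (D ν L x₀ : ℝ) (x t : ℝ) : ℝ :=
  U D ν x t x₀ - Real.exp ((ν / D) * (L - x₀)) * U D ν x t (2 * L - x₀)

lemma setIntegral_strict_mono_on {α : Type*} [MeasurableSpace α] {μ : Measure α} {f g : α → ℝ}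
    {s : Set α} (hf : IntegrableOn f s μ) (hg : IntegrableOn g s μ) (hs : MeasurableSet s)
    (hμs : μ s ≠ 0) (hfg : ∀ x ∈ s, f x < g x) :
    ∫ x in s, f x ∂μ < ∫ x in s, g x ∂μ := by
  have hnonneg : 0 ≤ᵐ[μ.restrict s] g - f :=
    ae_restrict_of_forall_mem hs fun x hx => (sub_pos.2 (hfg x hx)).le
  have hsupport : s ⊆ Function.support (g - f) := fun x hx => (sub_pos.2 (hfg x hx)).ne'
  rw [← sub_pos, ← integral_sub hg hf]
  refine (setIntegral_pos_iff_support_of_nonneg_ae hnonneg (hg.sub hf)).2 ?_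
  rwa [Set.inter_eq_right.2 hsupport, pos_iff_ne_zero]

section AbsorbingBoundary

variable {D t : ℝ}

lemma U_eq_gaussianPDFReal (hDt : 0 < D * t) (ν x η : ℝ) :
    U D ν x t η = ProbabilityTheory.gaussianPDFReal (η + ν * t) (2 * (D * t)).toNNReal x := by
  rw [U, ProbabilityTheory.gaussianPDFReal, Real.coe_toNNReal _ (by positivity), one_div]
  ring_nf

lemma U_pos (hDt : 0 < D * t) (ν x η : ℝ) : 0 < U D ν x t η := by
  rw [U_eq_gaussianPDFReal hDt]
  exact ProbabilityTheory.gaussianPDFReal_pos _ _ _ (Real.toNNReal_pos.2 (by positivity)).ne'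

lemma integrable_U (hDt : 0 < D * t) (ν η : ℝ) : Integrable fun x => U D ν x t η := by
  simp only [U_eq_gaussianPDFReal hDt]
  exact ProbabilityTheory.integrable_gaussianPDFReal _ _

lemma integral_U (hDt : 0 < D * t) (ν η : ℝ) : ∫ x, U D ν x t η = 1 := by
  simp only [U_eq_gaussianPDFReal hDt]
  exact ProbabilityTheory.integral_gaussianPDFReal_eq_one _
    (Real.toNNReal_pos.2 (by positivity)).ne'

lemma setIntegral_U_le_one (hDt : 0 < D * t) (ν η : ℝ) (s : Set ℝ) :
    ∫ x in s, U D ν x t η ≤ 1 :=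
  calc ∫ x in s, U D ν x t η
      ≤ ∫ x, U D ν x t η :=
        setIntegral_le_integral (integrable_U hDt ν η) (ae_of_all _ fun x => (U_pos hDt ν x η).le)
    _ = 1 := integral_U hDt ν η

lemma exp_mul_U_reflect (hDt : 0 < D * t) (ν L x₀ x : ℝ) :
    Real.exp ((ν / D) * (L - x₀)) * U D ν x t (2 * L - x₀) =
      Real.exp (-((L - x₀) * (L - x) / (D * t))) * U D ν x t x₀ := by
  obtain ⟨hD, ht⟩ : D ≠ 0 ∧ t ≠ 0 := mul_ne_zero_iff.1 hDt.ne'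
  have hexponent : (ν / D) * (L - x₀) + -(x - (2 * L - x₀) - ν * t) ^ 2 / (4 * D * t) =
      -((L - x₀) * (L - x) / (D * t)) + -(x - x₀ - ν * t) ^ 2 / (4 * D * t) := by
    field_simp
    ring
  rw [U, U, mul_left_comm, ← Real.exp_add, hexponent, Real.exp_add, mul_left_comm]

lemma pAbs_eq_one_sub_exp_mul_U (hDt : 0 < D * t) (ν L x₀ x : ℝ) :
    pAbs D ν L x₀ x t = (1 - Real.exp (-((L - x₀) * (L - x) / (D * t)))) * U D ν x t x₀ := by
  rw [pAbs, exp_mul_U_reflect hDt, one_sub_mul]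

lemma pAbs_pos_iff (hDt : 0 < D * t) (ν L x₀ x : ℝ) :
    0 < pAbs D ν L x₀ x t ↔ 0 < (L - x₀) * (L - x) := by
  rw [pAbs_eq_one_sub_exp_mul_U hDt, mul_pos_iff_of_pos_right (U_pos hDt ν x x₀), sub_pos,
    Real.exp_lt_one_iff, neg_lt_zero, div_pos_iff_of_pos_right hDt]

lemma pAbs_lt_U (hDt : 0 < D * t) (ν L x₀ x : ℝ) : pAbs D ν L x₀ x t < U D ν x t x₀ :=
  sub_lt_self _ (mul_pos (Real.exp_pos _) (U_pos hDt ν x (2 * L - x₀)))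

lemma integrable_pAbs (hDt : 0 < D * t) (ν L x₀ : ℝ) :
    Integrable fun x => pAbs D ν L x₀ x t :=
  (integrable_U hDt ν x₀).sub ((integrable_U hDt ν (2 * L - x₀)).const_mul _)

theorem pAbs_mass_lt_one_general (hDt : 0 < D * t) (ν : ℝ) {L x₀ : ℝ} {s : Set ℝ}
    (hs : MeasurableSet s) (hs₀ : volume s ≠ 0) (hside : ∀ x ∈ s, 0 < (L - x₀) * (L - x)) :
    0 < ∫ x in s, pAbs D ν L x₀ x t ∧ ∫ x in s, pAbs D ν L x₀ x t < 1 := by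
  have hp : IntegrableOn (fun x => pAbs D ν L x₀ x t) s := (integrable_pAbs hDt ν L x₀).integrableOn
  constructor
  · calc (0 : ℝ)
        = ∫ _ in s, 0 := (integral_zero _ _).symm
      _ < ∫ x in s, pAbs D ν L x₀ x t :=
        setIntegral_strict_mono_on integrableOn_zero hp hs hs₀ fun x hx =>
          (pAbs_pos_iff hDt ν L x₀ x).2 (hside x hx)
  · calc ∫ x in s, pAbs D ν L x₀ x t
        < ∫ x in s, U D ν x t x₀ :=
        setIntegral_strict_mono_on hp (integrable_U hDt ν x₀).integrableOn hs hs₀ fun x _ =>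
          pAbs_lt_U hDt ν L x₀ x
      _ ≤ 1 := setIntegral_U_le_one hDt ν x₀ s

end AbsorbingBoundary

/-- For every `t > 0`, the surviving mass `Q(t) = ∫_{−∞}^{L} p(x, t) dx` satisfies
`0 < Q(t) < 1`: the density is not normalized due to absorption at the wall. -/
theorem pAbs_mass_lt_one (D ν L x₀ : ℝ) (hD : 0 < D) (hx₀ : x₀ < L) :
    ∀ t : ℝ, 0 < t →
      0 < ∫ x in Set.Iic L, pAbs D ν L x₀ x t ∧
        (∫ x in Set.Iic L, pAbs D ν L x₀ x t) < 1 := by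
  intro t ht
  rw [integral_Iic_eq_integral_Iio]
  exact pAbs_mass_lt_one_general (mul_pos hD ht) ν measurableSet_Iio (by simp) fun x hx =>
    mul_pos (sub_pos.2 hx₀) (sub_pos.2 hx)
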